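/- Extension lemma for polynomial differential forms: given forms α₀,…,αₙ ∈ A^*(Δ_{n−1}) satisfying the compatibility conditions d_{i,n−1}^*(α_j) = d_{j−1,n−1}^*(α_i) for all 0 ≤ i < j ≤ n, there exists β ∈ A^*(Δ_n) such that d_{i,n}^*(β) = α_i for all 0 ≤ i ≤ n. -/

import Mathlib

/-!
STATEMENT 6: Extension lemma for polynomial differential forms: given
α₀,…,α_{n+2} ∈ A^*(Δ_{n+1}) with d_{i}^*(α_j) = d_{j−1}^*(α_i) for i < j
(i.e. an element of A^*(∂Δ_{n+2})), there exists β ∈ A^*(Δ_{n+2}) with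
d_{i}^*(β) = α_i for all i. Here d_{i,k}^* are the coface pullbacks, induced by
the strictly increasing maps [k−1] → [k] skipping i (Fin.succAbove).
-/

/-- A model of the polynomial de Rham algebra `A^*(Δ_n)` (see STATEMENT 4). -/
structure SimplexForms (n : ℕ) where
  A : Type
  [ringA : Ring A]
  [algA : Algebra ℂ A]
  grading : ℕ → Submodule ℂ A
  [gradedA : GradedAlgebra grading]
  gcomm : ∀ (p q : ℕ) (a b : A), a ∈ grading p → b ∈ grading q →
    a * b = ((-1 : ℤ) ^ (p * q)) • (b * a)
  d : A →ₗ[ℂ] A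
  d_mem : ∀ (q : ℕ) (a : A), a ∈ grading q → d a ∈ grading (q + 1)
  d_sq : ∀ a : A, d (d a) = 0
  leibniz : ∀ (p : ℕ) (a b : A), a ∈ grading p →
    d (a * b) = d a * b + ((-1 : ℤ) ^ p) • (a * d b)
  x : Fin (n + 1) → A
  x_mem : ∀ i, x i ∈ grading 0
  sum_x : ∑ i, x i = 1
  sum_dx : ∑ i, d (x i) = 0

attribute [instance] SimplexForms.ringA SimplexForms.algA SimplexForms.gradedA

/-- `Ω` is the polynomial de Rham algebra `A^*(Δ_n)`: universal property. -/
def IsPolyDeRham {n : ℕ} (Ω : SimplexForms n) : Prop :=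
  ∀ B : SimplexForms n, ∃! φ : Ω.A →ₐ[ℂ] B.A,
    (∀ a, φ (Ω.d a) = B.d (φ a)) ∧
    (∀ (p : ℕ) (a : Ω.A), a ∈ Ω.grading p → φ a ∈ B.grading p) ∧
    (∀ i, φ (Ω.x i) = B.x i)

/-- The property of being the pullback morphism `a^*` induced by
`a : [n] → [m]`: a morphism of dgas (commuting with `d` and preserving the
grading) with `φ(x_j) = Σ_{i : a i = j} x_i`. -/
def PullbackProp {m n : ℕ} (Ωm : SimplexForms m) (Ωn : SimplexForms n)
    (a : Fin (n + 1) → Fin (m + 1)) (φ : Ωm.A →ₐ[ℂ] Ωn.A) : Prop :=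
  (∀ y, φ (Ωm.d y) = Ωn.d (φ y)) ∧
  (∀ (p : ℕ) (y : Ωm.A), y ∈ Ωm.grading p → φ y ∈ Ωn.grading p) ∧
  (∀ j : Fin (m + 1),
    φ (Ωm.x j) = ∑ i ∈ Finset.univ.filter (fun i => a i = j), Ωn.x i)


/-- `F n` with the coordinates pulled back along `a`. -/
noncomputable def SimplexForms.reindex {m n : ℕ} (Ω : SimplexForms n)
    (a : Fin (n + 1) → Fin (m + 1)) : SimplexForms m :=
  { A := Ω.A
    grading := Ω.grading
    gcomm := Ω.gcomm
    d := Ω.d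
    d_mem := Ω.d_mem
    d_sq := Ω.d_sq
    leibniz := Ω.leibniz
    x := fun j => ∑ i ∈ Finset.univ.filter (fun i => a i = j), Ω.x i
    x_mem := fun _ => Submodule.sum_mem _ fun i _ => Ω.x_mem i
    sum_x := by
      rw [Finset.sum_fiberwise]
      exact Ω.sum_x
    sum_dx := by
      simp only [map_sum]
      rw [Finset.sum_fiberwise Finset.univ a (fun i => Ω.d (Ω.x i))]
      exact Ω.sum_dx }

theorem pullback_existsUnique {m n : ℕ} {Ωm : SimplexForms m} (h : IsPolyDeRham Ωm)
    (Ωn : SimplexForms n) (a : Fin (n + 1) → Fin (m + 1)) :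
    ∃! φ : Ωm.A →ₐ[ℂ] Ωn.A, PullbackProp Ωm Ωn a φ :=
  h (Ωn.reindex a)

theorem PullbackProp.comp {l m n : ℕ} {Ωl : SimplexForms l} {Ωm : SimplexForms m}
    {Ωn : SimplexForms n} {a : Fin (m + 1) → Fin (l + 1)} {b : Fin (n + 1) → Fin (m + 1)}
    {φ : Ωl.A →ₐ[ℂ] Ωm.A} {ψ : Ωm.A →ₐ[ℂ] Ωn.A}
    (hφ : PullbackProp Ωl Ωm a φ) (hψ : PullbackProp Ωm Ωn b ψ) :
    PullbackProp Ωl Ωn (a ∘ b) (ψ.comp φ) := by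
  refine ⟨fun y => ?_, fun p y hy => ?_, fun j => ?_⟩
  · simp [hφ.1, hψ.1]
  · exact hψ.2.1 p _ (hφ.2.1 p y hy)
  · simp only [AlgHom.comp_apply, hφ.2.2, map_sum, hψ.2.2]
    simp only [Finset.sum_filter, Function.comp]
    have : ∀ i : Fin (m + 1), (if a i = j then ∑ k, (if b k = i then Ωn.x k else 0) else 0)
        = ∑ k, (if b k = i then (if a (b k) = j then Ωn.x k else 0) else 0) := by
      intro i
      split_ifs with h
      · refine Finset.sum_congr rfl fun k _ => ?_
        by_cases hk : b k = i
        · simp [hk, h]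
        · simp [hk]
      · symm
        refine Finset.sum_eq_zero fun k _ => ?_
        by_cases hk : b k = i
        · simp [hk, h]
        · simp [hk]
    rw [Finset.sum_congr rfl fun i _ => this i, Finset.sum_comm]
    simp

theorem PullbackProp.id' {n : ℕ} (Ω : SimplexForms n) :
    PullbackProp Ω Ω id (AlgHom.id ℂ Ω.A) := by
  refine ⟨fun y => rfl, fun p y hy => hy, fun j => ?_⟩
  simp [Finset.sum_filter]

/-- Extension of a single form on the `r`-th face. -/
theorem extend_one (F : ∀ k, SimplexForms k) (hF : ∀ k, IsPolyDeRham (F k))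
    (pb : ∀ (k : ℕ) (i : Fin (k + 2)), (F (k + 1)).A →ₐ[ℂ] (F k).A)
    (hpb : ∀ (k : ℕ) (i : Fin (k + 2)),
      PullbackProp (F (k + 1)) (F k) (Fin.succAbove i) (pb k i))
    (n : ℕ) (r : Fin (n + 3)) (γ : (F (n + 1)).A) :
    ∃ η : (F (n + 2)).A, pb (n + 1) r η = γ ∧
      ∀ i' : Fin (n + 2), pb n i' γ = 0 → pb (n + 1) (r.succAbove i') η = 0 := by
  let σ : Fin (n + 2) → Fin (n + 3) → Fin (n + 2) := fun j =>
    Fin.insertNth (α := fun _ => Fin (n + 2)) r j id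
  have hσr : ∀ j, σ j r = j := fun j => by simp [σ]
  have hσs : ∀ j k, σ j (r.succAbove k) = k := fun j k => by simp [σ]
  choose S hS _ using fun j => pullback_existsUnique (hF (n + 1)) (F (n + 2)) (σ j)
  refine ⟨∑ j, (F (n + 2)).x (r.succAbove j) * S j γ, ?_, ?_⟩
  · have h1 : ∀ j, pb (n + 1) r (S j γ) = γ := by
      intro j
      have h := (hS j).comp (hpb (n + 1) r)
      have he : σ j ∘ r.succAbove = id := funext fun k => hσs j k
      rw [he] at h
      have := (pullback_existsUnique (hF (n + 1)) (F (n + 1)) id).unique h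
        (PullbackProp.id' _)
      exact DFunLike.congr_fun this γ
    have h2 : ∀ j, pb (n + 1) r ((F (n + 2)).x (r.succAbove j)) = (F (n + 1)).x j := by
      intro j
      rw [(hpb (n + 1) r).2.2]
      simp [Finset.sum_filter]
    simp only [map_sum, map_mul, h1, h2]
    rw [← Finset.sum_mul, (F (n + 1)).sum_x, one_mul]
  · intro i' hi'
    rw [map_sum]
    refine Finset.sum_eq_zero fun j _ => ?_
    rw [map_mul]
    by_cases hj : j = i'
    · subst hj
      rw [(hpb (n + 1) _).2.2]
      simp [Finset.sum_filter, Fin.succAbove_ne]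
    · have hmiss : ∀ k, σ j ((r.succAbove i').succAbove k) ≠ i' := by
        intro k hk
        rcases Fin.eq_self_or_eq_succAbove r ((r.succAbove i').succAbove k) with h | ⟨l, h⟩
        · rw [h, hσr] at hk
          exact hj hk
        · rw [h, hσs] at hk
          subst hk
          exact Fin.succAbove_ne _ _ h
      choose c hc using fun k => Fin.exists_succAbove_eq (hmiss k)
      obtain ⟨C, hC, _⟩ := pullback_existsUnique (hF n) (F (n + 1)) c
      have h := (hS j).comp (hpb (n + 1) (r.succAbove i'))
      have he : σ j ∘ (r.succAbove i').succAbove = i'.succAbove ∘ c :=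
        funext fun k => (hc k).symm
      rw [he] at h
      have := (pullback_existsUnique (hF (n + 1)) (F (n + 1)) _).unique h
        ((hpb n i').comp hC)
      have h3 := DFunLike.congr_fun this γ
      simp only [AlgHom.comp_apply, hi', map_zero] at h3
      rw [h3, mul_zero]

/-- (Extension lemma, Lemma 9.4 of Griffiths–Morgan.)
Given the coface pullback morphisms `pb k i = d_{i,k+1}^* : A^*(Δ_{k+1}) → A^*(Δ_k)`
and polynomial forms `α i ∈ A^*(Δ_{n+1})`, `0 ≤ i ≤ n+2`, satisfying the boundary
compatibility `d_{i}^*(α j) = d_{j-1}^*(α i)` for `i < j`, there is a form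
`β ∈ A^*(Δ_{n+2})` with `d_{i}^*(β) = α i` for all `i`. -/
theorem simplex_extension
    (F : ∀ k, SimplexForms k) (hF : ∀ k, IsPolyDeRham (F k))
    (pb : ∀ (k : ℕ) (i : Fin (k + 2)), (F (k + 1)).A →ₐ[ℂ] (F k).A)
    (hpb : ∀ (k : ℕ) (i : Fin (k + 2)),
      PullbackProp (F (k + 1)) (F k) (Fin.succAbove i) (pb k i))
    (n : ℕ) (α : Fin (n + 3) → (F (n + 1)).A)
    (hα : ∀ (i j : Fin (n + 3)) (hij : i.1 < j.1),
      pb n ⟨i.1, by have := j.isLt; omega⟩ (α j) =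
        pb n ⟨j.1 - 1, by have := j.isLt; omega⟩ (α i)) :
    ∃ β : (F (n + 2)).A, ∀ i : Fin (n + 3), pb (n + 1) i β = α i := by
  have key : ∀ r : ℕ, r ≤ n + 3 → ∃ β : (F (n + 2)).A, ∀ i : Fin (n + 3), i.1 < r →
      pb (n + 1) i β = α i := by
    intro r
    induction r with
    | zero => exact fun _ => ⟨0, fun i hi => absurd hi (Nat.not_lt_zero _)⟩
    | succ r ih =>
      intro hr
      obtain ⟨β, hβ⟩ := ih (by omega)
      let R : Fin (n + 3) := ⟨r, by omega⟩
      obtain ⟨η, hη, hη0⟩ := extend_one F hF pb hpb n R (α R - pb (n + 1) R β)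
      refine ⟨β + η, fun i hi => ?_⟩
      rw [map_add]
      rcases Nat.lt_succ_iff_lt_or_eq.mp hi with h | h
      · have hs : R.succAbove ⟨i.1, by omega⟩ = i := by
          ext
          simp [R, Fin.succAbove, Fin.lt_def, h]
        have hz := hη0 ⟨i.1, by omega⟩ ?_
        · rw [hs] at hz
          rw [hz, add_zero, hβ i h]
        · rw [map_sub, hα i R h, ← hβ i h, sub_eq_zero]
          have h1 := (hpb (n + 1) i).comp (hpb n ⟨R.1 - 1, by have := R.isLt; omega⟩)
          have h2 := (hpb (n + 1) R).comp (hpb n ⟨i.1, by omega⟩)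
          have he : i.succAbove ∘ (⟨R.1 - 1, by have := R.isLt; omega⟩ : Fin (n + 2)).succAbove
              = R.succAbove ∘ (⟨i.1, by omega⟩ : Fin (n + 2)).succAbove := by
            funext k
            ext
            simp only [R, Function.comp, Fin.succAbove, Fin.lt_def]
            split_ifs <;> simp_all <;> omega
          rw [he] at h1
          exact DFunLike.congr_fun
            ((pullback_existsUnique (hF (n + 2)) (F n) _).unique h1 h2) β
      · have : i = R := Fin.ext h
        subst this
        rw [hη, add_sub_cancel]
  obtain ⟨β, hβ⟩ := key (n + 3) le_rfl
  exact ⟨β, fun i => hβ i i.isLt⟩
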